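/- If α ∈ Λ has E-degree p and β ∈ Λ has E-degree q with p + q > n, then for every natural number j one has Σ_{k=0}^{j} (j choose k) · ι_ξ^k(α) * ι_ξ^{j−k}(β) = 0. (General form of the paper's family of identities obtained by applying the k-fold contraction with the odd vector field ξ to forms of degree exceeding the dimension.) -/

import Mathlib

/-!
Each `∂_i` is an odd derivation and multiplication by `θ_i` is odd as well, so the two signs cancel
and `ι_ξ` is an ordinary derivation. By the general Leibniz rule the sum is therefore
`ι_ξ ^ j (α * β)`, and `α * β = 0` because it comes from `⋀^(p + q) E` with `p + q > dim E`.
-/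

noncomputable section

open ExteriorAlgebra

variable (E G : Type) [AddCommGroup E] [Module ℝ E] [AddCommGroup G] [Module ℝ G]

/-- The ghost generator `θ = ι(0, g)`. -/
def ghost (g : G) : ExteriorAlgebra ℝ (E × G) := ExteriorAlgebra.ι ℝ ((0 : E), g)

/-- The extension `f̃(e, g) = f(e)` of a covector on `E` to `E × G`. -/
def fTilde (f : Module.Dual ℝ E) : Module.Dual ℝ (E × G) := f.comp (LinearMap.fst ℝ E G)

/-- The odd contraction `ι_ξ x = Σ_i θ_i * ∂_i x`. -/
def iotaXi {k : ℕ} (g : Fin k → G) (f : Fin k → Module.Dual ℝ E) :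
    ExteriorAlgebra ℝ (E × G) →ₗ[ℝ] ExteriorAlgebra ℝ (E × G) :=
  ∑ i, (LinearMap.mulLeft ℝ (ghost E G (g i))).comp
    (CliffordAlgebra.contractLeft (fTilde E G (f i)))

/-- The algebra map `Λ(E) → Λ(E × G)` induced by `e ↦ (e, 0)`. -/
def inclE : ExteriorAlgebra ℝ E →ₐ[ℝ] ExteriorAlgebra ℝ (E × G) :=
  ExteriorAlgebra.lift ℝ ⟨(ExteriorAlgebra.ι ℝ).comp (LinearMap.inl ℝ E G),
    fun _ => ExteriorAlgebra.ι_sq_zero _⟩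

/-- `x ∈ Λ(E × G)` has `E`-degree `p` if it is the image of an element of the `p`-th
exterior power of `E` under the algebra map induced by `e ↦ (e, 0)`. -/
def HasEDegree (p : ℕ) (x : ExteriorAlgebra ℝ (E × G)) : Prop :=
  x ∈ Submodule.map (inclE E G).toLinearMap (⋀[ℝ]^p E)

section GeneralLeibniz

open Finset

variable {R A : Type*} [Semiring R] [NonUnitalNonAssocSemiring A] [Module R A]

theorem pow_apply_mul_eq_sum_antidiagonal_of_leibniz (D : Module.End R A)
    (leibniz : ∀ x y, D (x * y) = D x * y + x * D y) (n : ℕ) (a b : A) :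
    (D ^ n) (a * b) =
      ∑ ij ∈ antidiagonal n, n.choose ij.1 • ((D ^ ij.1) a * (D ^ ij.2) b) := by
  induction n with
  | zero => simp
  | succ n ih =>
    rw [sum_antidiagonal_choose_succ_nsmul (fun i j => (D ^ i) a * (D ^ j) b) n]
    simp only [pow_succ', Module.End.mul_apply, ih, map_sum, map_nsmul, leibniz, nsmul_add,
      sum_add_distrib]
    rw [add_comm]
    congr 1
    refine sum_congr rfl fun ij hij => ?_
    rw [n.choose_symm_of_eq_add (mem_antidiagonal.1 hij).symm]

theorem pow_apply_mul_eq_sum_range_of_leibniz (D : Module.End R A)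
    (leibniz : ∀ x y, D (x * y) = D x * y + x * D y) (n : ℕ) (a b : A) :
    (D ^ n) (a * b) =
      ∑ i ∈ range (n + 1), n.choose i • ((D ^ i) a * (D ^ (n - i)) b) := by
  rw [pow_apply_mul_eq_sum_antidiagonal_of_leibniz D leibniz]
  exact Finset.Nat.sum_antidiagonal_eq_sum_range_succ
    (fun i j => n.choose i • ((D ^ i) a * (D ^ j) b)) n

end GeneralLeibniz

section Contraction

open CliffordAlgebra (contractLeft involute)

variable {R M : Type*} [CommRing R] [AddCommGroup M] [Module R M]

theorem contractLeft_mul {Q : QuadraticForm R M} (d : Module.Dual R M) (x y : CliffordAlgebra Q) :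
    contractLeft d (x * y) = contractLeft d x * y + involute x * contractLeft d y := by
  induction x using CliffordAlgebra.left_induction with
  | algebraMap r =>
    rw [CliffordAlgebra.contractLeft_algebraMap_mul, CliffordAlgebra.contractLeft_algebraMap,
      AlgHom.commutes, zero_mul, zero_add]
  | add x₁ x₂ h₁ h₂ =>
    simp only [add_mul, map_add, h₁, h₂]
    abel
  | ι_mul x m hx =>
    rw [mul_assoc, CliffordAlgebra.contractLeft_ι_mul, CliffordAlgebra.contractLeft_ι_mul, hx,
      map_mul, CliffordAlgebra.involute_ι, sub_mul, smul_mul_assoc, mul_add]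
    noncomm_ring

theorem ι_mul_involute (u : M) (x : ExteriorAlgebra R M) :
    ι R u * involute x = x * ι R u := by
  induction x using CliffordAlgebra.left_induction with
  | algebraMap r =>
    rw [AlgHom.commutes]
    exact (Algebra.commutes r _).symm
  | add x₁ x₂ h₁ h₂ => rw [map_add, mul_add, h₁, h₂, add_mul]
  | ι_mul x m hx =>
    have anticomm : ι R u * -ι R m = ι R m * ι R u := by
      rw [mul_neg, neg_eq_iff_add_eq_zero, ι_add_mul_swap]
    rw [map_mul, CliffordAlgebra.involute_ι, mul_assoc, ← hx, ← mul_assoc, ← mul_assoc]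
    exact congrArg (· * involute x) anticomm

theorem ι_mul_contractLeft_mul (u : M) (d : Module.Dual R M) (x y : ExteriorAlgebra R M) :
    ι R u * contractLeft d (x * y) =
      ι R u * contractLeft d x * y + x * (ι R u * contractLeft d y) := by
  rw [contractLeft_mul, mul_add, ← mul_assoc, ← mul_assoc, ι_mul_involute, mul_assoc x]

end Contraction

theorem exteriorPower_eq_bot_of_finrank_lt {R M : Type*} [CommRing R] [Nontrivial R]
    [AddCommGroup M] [Module R M] [Module.Free R M] [Module.Finite R M] {n : ℕ}
    (hn : Module.finrank R M < n) : ⋀[R]^n M = ⊥ := by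
  rw [← Submodule.subsingleton_iff_eq_bot, ← Module.finrank_eq_zero_iff_of_free (R := R),
    exteriorPower.finrank_eq, Nat.choose_eq_zero_of_lt hn]

section

variable {E G}

theorem HasEDegree.mul {p q : ℕ} {α β : ExteriorAlgebra ℝ (E × G)}
    (hα : HasEDegree E G p α) (hβ : HasEDegree E G q β) : HasEDegree E G (p + q) (α * β) := by
  obtain ⟨a, ha, rfl⟩ := hα
  obtain ⟨b, hb, rfl⟩ := hβ
  exact ⟨a * b, SetLike.mul_mem_graded ha hb, map_mul (inclE E G) a b⟩

theorem HasEDegree.eq_zero_of_finrank_lt [FiniteDimensional ℝ E] {p : ℕ}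
    {α : ExteriorAlgebra ℝ (E × G)} (hα : HasEDegree E G p α) (hp : Module.finrank ℝ E < p) :
    α = 0 := by
  rwa [HasEDegree, exteriorPower_eq_bot_of_finrank_lt hp, Submodule.map_bot,
    Submodule.mem_bot] at hα

theorem iotaXi_mul {k : ℕ} (g : Fin k → G) (f : Fin k → Module.Dual ℝ E)
    (x y : ExteriorAlgebra ℝ (E × G)) :
    iotaXi E G g f (x * y) = iotaXi E G g f x * y + x * iotaXi E G g f y := by
  simp only [iotaXi, ghost, LinearMap.sum_apply, LinearMap.comp_apply, LinearMap.mulLeft_apply,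
    ι_mul_contractLeft_mul, Finset.sum_add_distrib, Finset.sum_mul, Finset.mul_sum]

theorem iotaXi_pow_leibniz_vanish_general [FiniteDimensional ℝ E]
    {k : ℕ} (g : Fin k → G) (f : Fin k → Module.Dual ℝ E)
    {p q : ℕ} {α β : ExteriorAlgebra ℝ (E × G)}
    (hα : HasEDegree E G p α) (hβ : HasEDegree E G q β)
    (hpq : Module.finrank ℝ E < p + q) (j : ℕ) :
    ∑ i ∈ Finset.range (j + 1),
      j.choose i • ((iotaXi E G g f ^ i) α * (iotaXi E G g f ^ (j - i)) β) = 0 := by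
  have hαβ : α * β = 0 := (hα.mul hβ).eq_zero_of_finrank_lt hpq
  rw [← pow_apply_mul_eq_sum_range_of_leibniz _ (iotaXi_mul g f), hαβ, map_zero]

end

/-- If `α` has `E`-degree `p` and `β` has `E`-degree `q` with
`p + q > n`, then for every `j`, `Σ_{k=0}^{j} (j choose k) · ι_ξ^k(α) * ι_ξ^{j−k}(β) = 0`. -/
theorem iotaXi_pow_leibniz_vanish [FiniteDimensional ℝ E] [FiniteDimensional ℝ G]
    {k : ℕ} (g : Fin k → G) (f : Fin k → Module.Dual ℝ E)
    (p q : ℕ) (α β : ExteriorAlgebra ℝ (E × G))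
    (hα : HasEDegree E G p α) (hβ : HasEDegree E G q β)
    (hpq : p + q > Module.finrank ℝ E) (j : ℕ) :
    ∑ i ∈ Finset.range (j + 1),
      j.choose i • ((iotaXi E G g f ^ i) α * (iotaXi E G g f ^ (j - i)) β) = 0 := by
  exact iotaXi_pow_leibniz_vanish_general g f hα hβ hpq j
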